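/- There exist constants c > 0 and ε₀ > 0 such that for every integer n ≥ 2, Kac's random walk on SO(n) satisfies τ_{hs,1}(ε₀) ≥ c·n²; that is, for every integer t < c·n² there exists a probability measure μ on SO(n) with W_{hs,1}(μK^t, H) > ε₀, where H is the Haar probability measure on SO(n). -/

import Mathlib

open MeasureTheory ENNReal Filter Topology Matrix

noncomputable section

/-- The (Borel) product measurable structure on matrices. -/
instance matrixMeasurableSpace {m n R : Type*} [MeasurableSpace R] :
    MeasurableSpace (Matrix m n R) :=
  (inferInstance : MeasurableSpace (m → n → R))

/-- `η` is a coupling of `μ` and `ν`: its two marginals are `μ` and `ν`. -/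
def IsCoupling {X : Type*} [MeasurableSpace X] (η : Measure (X × X)) (μ ν : Measure X) : Prop :=
  η.map Prod.fst = μ ∧ η.map Prod.snd = ν

/-- The `L^p` transportation cost (Wasserstein) distance associated with the distance
function `d`, with values in `ℝ≥0∞`:
`W_{d,p}(μ,ν) = inf { (∫ d(x,y)^p dη)^{1/p} : η a coupling of (μ,ν) }`. -/
def wassersteinE {X : Type*} [MeasurableSpace X] (d : X → X → ℝ≥0∞) (p : ℝ)
    (μ ν : Measure X) : ℝ≥0∞ :=
  ⨅ (η : Measure (X × X)) (_ : IsCoupling η μ ν), (∫⁻ z, d z.1 z.2 ^ p ∂η) ^ (1 / p)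

/-- The length of the curve `γ` over `[0,1]`, w.r.t. the distance function `d`:
the supremum, over all partitions `0 = t 0 ≤ t 1 ≤ ⋯ ≤ t k = 1` of `[0,1]`, of the sums of
the distances between consecutive points of the curve. -/
def pathLengthE {X : Type*} (d : X → X → ℝ≥0∞) (γ : ℝ → X) : ℝ≥0∞ :=
  ⨆ (k : ℕ) (t : Fin (k + 1) → ℝ) (_ : Monotone t) (_ : t 0 = 0) (_ : t (Fin.last k) = 1),
    ∑ i : Fin k, d (γ (t i.castSucc)) (γ (t i.succ))

/-- The intrinsic (length) distance on the set `S` induced by the distance function `d`: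
the infimum of `d`-lengths of continuous paths joining `a` to `b` inside `S`. -/
def intrinsicDistE {X : Type*} [TopologicalSpace X] (d : X → X → ℝ≥0∞) (S : Set X)
    (a b : X) : ℝ≥0∞ :=
  ⨅ (γ : ℝ → X) (_ : ContinuousOn γ (Set.Icc 0 1)) (_ : Set.MapsTo γ (Set.Icc 0 1) S)
    (_ : γ 0 = a) (_ : γ 1 = b), pathLengthE d γ

/-- `t` iterated steps of the Markov transition kernel `P`, started from the initial
distribution `μ` (so `kernelIterate P t μ = μP^t`). -/
def kernelIterate {X : Type*} [MeasurableSpace X] (P : X → Measure X) :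
    ℕ → Measure X → Measure X
  | 0, μ => μ
  | t + 1, μ => (kernelIterate P t μ).bind P

/-- A Haar probability measure for the multiplicative set `S`, viewed as a measure on the
ambient space: a probability measure carried by `S` that is invariant under left and right
translations by all elements of `S`. -/
def IsHaarLike {X : Type*} [MeasurableSpace X] [Mul X] (S : Set X) (μ : Measure X) : Prop :=
  IsProbabilityMeasure μ ∧ μ Sᶜ = 0 ∧
    ∀ a ∈ S, μ.map (fun x => a * x) = μ ∧ μ.map (fun x => x * a) = μ

/-- The Haar probability measure of a compact matrix group `S` (such as `SO(n)` or `U(n)`),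
viewed as a measure on the ambient matrix space.  For such `S` a translation-invariant
probability measure exists and is unique, so `haarLike S` is *the* Haar probability
measure of `S`. -/
def haarLike {X : Type*} [MeasurableSpace X] [Mul X] (S : Set X) : Measure X := by
  classical exact if h : ∃ μ, IsHaarLike S μ then h.choose else 0

/-- The set of pairs `1 ≤ i < j ≤ n` of indices. -/
def pairs (n : ℕ) : Finset (Fin n × Fin n) :=
  Finset.univ.filter fun p => p.1 < p.2

/-- The special orthogonal group `SO(n)`, as a subset of the `n × n` real matrices. -/
def SO (n : ℕ) : Set (Matrix (Fin n) (Fin n) ℝ) :=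
  {a | a * aᵀ = 1 ∧ a.det = 1}

/-- The Hilbert–Schmidt (Frobenius) distance `‖a - b‖_hs = √(Tr((a-b)ᵀ(a-b)))` between real
matrices, as an `ℝ≥0∞`-valued distance function. -/
def hsDist {n : ℕ} (a b : Matrix (Fin n) (Fin n) ℝ) : ℝ≥0∞ :=
  ENNReal.ofReal (Real.sqrt (Matrix.trace ((a - b)ᵀ * (a - b))))

/-- The intrinsic (Riemannian/length) metric `D` on `SO(n)` induced by the Hilbert–Schmidt
norm: the infimum of `hs`-lengths of continuous paths inside `SO(n)`. -/
def DSO (n : ℕ) (a b : Matrix (Fin n) (Fin n) ℝ) : ℝ≥0∞ :=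
  intrinsicDistE hsDist (SO n) a b

/-- The rotation `R(i,j,θ)` by the angle `θ` of the plane spanned by the `i`-th and `j`-th
canonical basis vectors: `R e_i = cos θ e_i + sin θ e_j`, `R e_j = cos θ e_j - sin θ e_i`,
and `R e_k = e_k` for `k ∉ {i,j}`. -/
def kacRot {n : ℕ} (i j : Fin n) (θ : ℝ) : Matrix (Fin n) (Fin n) ℝ :=
  Matrix.of fun k l =>
    if k = i ∧ l = i then Real.cos θ
    else if k = j ∧ l = i then Real.sin θ
    else if k = i ∧ l = j then -Real.sin θ
    else if k = j ∧ l = j then Real.cos θ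
    else if k = l then 1 else 0

/-- The uniform probability measure on the angle interval `[0, 2π]`. -/
def uniformAngle : Measure ℝ :=
  (ENNReal.ofReal (2 * Real.pi))⁻¹ • MeasureTheory.volume.restrict (Set.Icc 0 (2 * Real.pi))

/-- The transition kernel of Kac's random walk on `SO(n)`:
`K_x = (1/(2π·C(n,2))) ∑_{1≤i<j≤n} ∫₀^{2π} δ_{R(i,j,θ)·x} dθ`. -/
def kacKernel (n : ℕ) (x : Matrix (Fin n) (Fin n) ℝ) : Measure (Matrix (Fin n) (Fin n) ℝ) :=
  (n.choose 2 : ℝ≥0∞)⁻¹ •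
    ∑ p ∈ pairs n, uniformAngle.map fun θ => kacRot p.1 p.2 θ * x

/-- The Hilbert–Schmidt norm of a real matrix. -/
def hsNorm {n : ℕ} (a : Matrix (Fin n) (Fin n) ℝ) : ℝ :=
  √(∑ i, ∑ j, a i j ^ 2)

section HilbertSchmidt

variable {n : ℕ}

lemma trace_transpose_mul_self_eq_sum (a : Matrix (Fin n) (Fin n) ℝ) :
    Matrix.trace (aᵀ * a) = ∑ i, ∑ j, a i j ^ 2 := by
  rw [Finset.sum_comm]
  simp [Matrix.trace, Matrix.mul_apply, pow_two]

lemma hsDist_eq_ofReal_hsNorm (a b : Matrix (Fin n) (Fin n) ℝ) :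
    hsDist a b = ENNReal.ofReal (hsNorm (a - b)) := by
  rw [hsDist, hsNorm, trace_transpose_mul_self_eq_sum]

lemma hsNorm_nonneg (a : Matrix (Fin n) (Fin n) ℝ) : 0 ≤ hsNorm a := Real.sqrt_nonneg _

lemma hsNorm_sq (a : Matrix (Fin n) (Fin n) ℝ) : hsNorm a ^ 2 = ∑ i, ∑ j, a i j ^ 2 :=
  Real.sq_sqrt (by positivity)

open scoped Matrix.Norms.Frobenius in
lemma hsNorm_eq_norm (a : Matrix (Fin n) (Fin n) ℝ) : hsNorm a = ‖a‖ := by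
  simp [hsNorm, Matrix.frobenius_norm_def, Real.sqrt_eq_rpow]

open scoped Matrix.Norms.Frobenius in
lemma hsNorm_add_le (a b : Matrix (Fin n) (Fin n) ℝ) :
    hsNorm (a + b) ≤ hsNorm a + hsNorm b := by
  simp only [hsNorm_eq_norm]
  exact norm_add_le a b

lemma hsNorm_neg (a : Matrix (Fin n) (Fin n) ℝ) : hsNorm (-a) = hsNorm a := by
  simp [hsNorm]

lemma hsNorm_sub_comm (a b : Matrix (Fin n) (Fin n) ℝ) : hsNorm (a - b) = hsNorm (b - a) := by
  rw [← hsNorm_neg, neg_sub]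

lemma hsNorm_transpose (a : Matrix (Fin n) (Fin n) ℝ) : hsNorm aᵀ = hsNorm a := by
  rw [hsNorm, hsNorm, Finset.sum_comm]
  rfl

lemma transpose_mul_self_of_mem_SO {g : Matrix (Fin n) (Fin n) ℝ} (hg : g ∈ SO n) :
    gᵀ * g = 1 :=
  mul_eq_one_comm.mp hg.1

lemma hsNorm_mul_left {g : Matrix (Fin n) (Fin n) ℝ} (hg : g ∈ SO n)
    (a : Matrix (Fin n) (Fin n) ℝ) : hsNorm (g * a) = hsNorm a := by
  rw [hsNorm, hsNorm, ← trace_transpose_mul_self_eq_sum, ← trace_transpose_mul_self_eq_sum,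
    Matrix.transpose_mul, Matrix.mul_assoc, ← Matrix.mul_assoc gᵀ,
    transpose_mul_self_of_mem_SO hg, Matrix.one_mul]

lemma transpose_mem_SO {g : Matrix (Fin n) (Fin n) ℝ} (hg : g ∈ SO n) : gᵀ ∈ SO n :=
  ⟨by simpa using transpose_mul_self_of_mem_SO hg, by simpa using hg.2⟩

lemma mul_mem_SO {g h : Matrix (Fin n) (Fin n) ℝ} (hg : g ∈ SO n) (hh : h ∈ SO n) :
    g * h ∈ SO n := by
  refine ⟨?_, by rw [Matrix.det_mul, hg.2, hh.2, one_mul]⟩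
  rw [Matrix.transpose_mul, Matrix.mul_assoc, ← Matrix.mul_assoc h, hh.1, Matrix.one_mul, hg.1]

lemma one_mem_SO : (1 : Matrix (Fin n) (Fin n) ℝ) ∈ SO n := by
  simp [SO]

lemma hsNorm_mul_right {g : Matrix (Fin n) (Fin n) ℝ} (hg : g ∈ SO n)
    (a : Matrix (Fin n) (Fin n) ℝ) : hsNorm (a * g) = hsNorm a := by
  rw [← hsNorm_transpose, Matrix.transpose_mul, hsNorm_mul_left (transpose_mem_SO hg),
    hsNorm_transpose]

lemma measurable_matrix_apply (i j : Fin n) :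
    Measurable fun a : Matrix (Fin n) (Fin n) ℝ => a i j :=
  (measurable_pi_apply j).comp (measurable_pi_apply i)

lemma measurable_matrix_iff {α : Type*} [MeasurableSpace α]
    {f : α → Matrix (Fin n) (Fin n) ℝ} :
    Measurable f ↔ ∀ i j, Measurable fun x => f x i j :=
  ⟨fun h i j => (measurable_matrix_apply i j).comp h,
    fun h => measurable_pi_lambda _ fun i => measurable_pi_lambda _ fun j => h i j⟩

lemma Measurable.matrixMul {α : Type*} [MeasurableSpace α]
    {f g : α → Matrix (Fin n) (Fin n) ℝ} (hf : Measurable f) (hg : Measurable g) :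
    Measurable fun x => f x * g x := by
  rw [measurable_matrix_iff] at *
  intro i j
  simp only [Matrix.mul_apply]
  exact Finset.measurable_sum _ fun k _ => (hf i k).mul (hg k j)

lemma Measurable.matrixSub {α : Type*} [MeasurableSpace α]
    {f g : α → Matrix (Fin n) (Fin n) ℝ} (hf : Measurable f) (hg : Measurable g) :
    Measurable fun x => f x - g x := by
  rw [measurable_matrix_iff] at *
  exact fun i j => (hf i j).sub (hg i j)

lemma measurable_hsNorm : Measurable (hsNorm : Matrix (Fin n) (Fin n) ℝ → ℝ) :=
  Real.continuous_sqrt.measurable.comp <| Finset.measurable_sum _ fun i _ =>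
    Finset.measurable_sum _ fun j _ => (measurable_matrix_apply i j).pow_const 2

end HilbertSchmidt

section Rotations

variable {n : ℕ}

lemma kacRot_mul_apply {i j : Fin n} (hij : i ≠ j) (θ : ℝ) (x : Matrix (Fin n) (Fin n) ℝ)
    (k l : Fin n) :
    (kacRot i j θ * x) k l =
      if k = i then Real.cos θ * x i l - Real.sin θ * x j l
      else if k = j then Real.sin θ * x i l + Real.cos θ * x j l else x k l := by
  rw [Matrix.mul_apply]
  by_cases hki : k = i
  · subst hki
    have h : ∀ r, kacRot k j θ k r * x r l =
        (if r = k then Real.cos θ * x k l else 0) +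
          (if r = j then -Real.sin θ * x j l else 0) := by
      intro r
      simp only [kacRot, Matrix.of_apply]
      by_cases hrk : r = k
      · subst hrk; simp [hij]
      · by_cases hrj : r = j
        · subst hrj; simp [hij, hrk]
        · simp [hij, hrk, hrj, Ne.symm hrk]
    simp only [h, Finset.sum_add_distrib, Finset.sum_ite_eq', Finset.mem_univ, if_true]
    ring
  · by_cases hkj : k = j
    · subst hkj
      have h : ∀ r, kacRot i k θ k r * x r l =
          (if r = i then Real.sin θ * x i l else 0) +
            (if r = k then Real.cos θ * x k l else 0) := by
        intro r
        simp only [kacRot, Matrix.of_apply]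
        by_cases hri : r = i
        · subst hri; simp [hij, hki]
        · by_cases hrj : r = k
          · subst hrj; simp [hki]
          · simp [hki, hri, hrj, Ne.symm hrj]
      simp [h, Finset.sum_add_distrib, hki]
    · have h : ∀ r, kacRot i j θ k r * x r l = if r = k then x k l else 0 := by
        intro r
        by_cases hrk : r = k
        · subst hrk; simp [kacRot, hki, hkj]
        · simp [kacRot, hki, hkj, hrk, Ne.symm hrk]
      simp [h, hki, hkj]

lemma kacRot_apply {i j : Fin n} (hij : i ≠ j) (θ : ℝ) (k l : Fin n) :
    kacRot i j θ k l =
      if k = i then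
        Real.cos θ * (1 : Matrix (Fin n) (Fin n) ℝ) i l -
          Real.sin θ * (1 : Matrix (Fin n) (Fin n) ℝ) j l
      else if k = j then
        Real.sin θ * (1 : Matrix (Fin n) (Fin n) ℝ) i l +
          Real.cos θ * (1 : Matrix (Fin n) (Fin n) ℝ) j l
      else (1 : Matrix (Fin n) (Fin n) ℝ) k l := by
  rw [← kacRot_mul_apply hij, Matrix.mul_one]

lemma kacRot_mul_kacRot {i j : Fin n} (hij : i ≠ j) (θ φ : ℝ) :
    kacRot i j θ * kacRot i j φ = kacRot i j (θ + φ) := by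
  ext k l
  rw [kacRot_mul_apply hij]
  simp only [kacRot_apply hij, hij.symm, if_true, if_false, Real.cos_add, Real.sin_add]
  split_ifs <;> ring

lemma kacRot_zero (i j : Fin n) : kacRot i j 0 = 1 := by
  ext k l
  simp only [kacRot, Matrix.of_apply, Real.cos_zero, Real.sin_zero, Matrix.one_apply, neg_zero]
  grind

lemma kacRot_transpose {i j : Fin n} (hij : i ≠ j) (θ : ℝ) :
    (kacRot i j θ)ᵀ = kacRot i j (-θ) := by
  ext k l
  simp only [Matrix.transpose_apply, kacRot, Matrix.of_apply, Real.cos_neg, Real.sin_neg, neg_neg]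
  grind

lemma kacRot_mem_SO {i j : Fin n} (hij : i ≠ j) (θ : ℝ) : kacRot i j θ ∈ SO n := by
  have hmul : ∀ φ : ℝ, kacRot i j φ * (kacRot i j φ)ᵀ = 1 := fun φ => by
    rw [kacRot_transpose hij, kacRot_mul_kacRot hij, add_neg_cancel, kacRot_zero]
  refine ⟨hmul θ, ?_⟩
  have hsq := congrArg Matrix.det (hmul (θ / 2))
  rw [Matrix.det_mul, Matrix.det_transpose, Matrix.det_one] at hsq
  rw [← add_halves θ, ← kacRot_mul_kacRot hij, Matrix.det_mul, hsq]

lemma measurable_kacRot (i j : Fin n) : Measurable fun θ : ℝ => kacRot i j θ := by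
  rw [measurable_matrix_iff]
  intro k l
  simp only [kacRot, Matrix.of_apply]
  split_ifs <;> fun_prop

lemma hsNorm_kacRot_sub_le {i j : Fin n} (θ φ : ℝ) :
    hsNorm (kacRot i j θ - kacRot i j φ) ≤ 2 * |θ - φ| := by
  have hc : (Real.cos θ - Real.cos φ) ^ 2 ≤ (θ - φ) ^ 2 :=
    sq_le_sq.mpr (Real.abs_cos_sub_cos_le θ φ)
  have hs : (Real.sin θ - Real.sin φ) ^ 2 ≤ (θ - φ) ^ 2 :=
    sq_le_sq.mpr (Real.abs_sin_sub_sin_le θ φ)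
  let f : Fin n → ℝ := fun k => (if k = i then 1 else 0) + (if k = j then 1 else 0)
  have hentry : ∀ k l, (kacRot i j θ - kacRot i j φ) k l ^ 2 ≤ (θ - φ) ^ 2 * (f k * f l) := by
    intro k l
    have h0 := sq_nonneg (θ - φ)
    have hs' : (-Real.sin θ - -Real.sin φ) ^ 2 ≤ (θ - φ) ^ 2 := by linarith
    simp only [Matrix.sub_apply, kacRot, Matrix.of_apply, f]
    split_ifs <;> (simp_all; try nlinarith)
  have hf : ∑ k, f k = 2 := by
    simp [f, Finset.sum_add_distrib]; norm_num
  have hsum : ∑ k, ∑ l, (kacRot i j θ - kacRot i j φ) k l ^ 2 ≤ (2 * |θ - φ|) ^ 2 := by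
    calc _ ≤ ∑ k, ∑ l, (θ - φ) ^ 2 * (f k * f l) :=
          Finset.sum_le_sum fun k _ => Finset.sum_le_sum fun l _ => hentry k l
      _ = (θ - φ) ^ 2 * ((∑ k, f k) * ∑ l, f l) := by
          rw [Finset.sum_mul_sum]
          simp only [Finset.mul_sum]
      _ = (2 * |θ - φ|) ^ 2 := by rw [hf, mul_pow, sq_abs]; ring
  exact Real.sqrt_le_iff.mpr ⟨by positivity, hsum⟩

end Rotations

section Kernel

variable {n : ℕ}

instance isProbabilityMeasure_uniformAngle : IsProbabilityMeasure uniformAngle := by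
  refine ⟨?_⟩
  have h : ENNReal.ofReal (2 * Real.pi) ≠ 0 := by simp [Real.pi_pos]
  rw [uniformAngle, Measure.smul_apply, Measure.restrict_apply_univ, Real.volume_Icc, sub_zero,
    smul_eq_mul, ENNReal.inv_mul_cancel h ENNReal.ofReal_ne_top]

lemma ne_of_mem_pairs {p : Fin n × Fin n} (hp : p ∈ pairs n) : p.1 ≠ p.2 :=
  (Finset.mem_filter.mp hp).2.ne

lemma card_pairs : (pairs n).card = n.choose 2 := by
  have h : ∀ j : Fin n, ∑ i : Fin n, (if i < j then 1 else 0) = (j : ℕ) := fun j => by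
    rw [← Finset.card_filter, Finset.filter_gt_eq_Iio, Fin.card_Iio]
  rw [pairs, Finset.card_filter, Fintype.sum_prod_type_right]
  simp only [h]
  rw [Fin.sum_univ_eq_sum_range (fun i => i) n, Finset.sum_range_id, Nat.choose_two_right]

lemma measurable_kacKernel : Measurable (kacKernel n) := by
  refine Measure.measurable_of_measurable_coe _ fun s hs => ?_
  simp only [kacKernel, Measure.smul_apply, Measure.finsetSum_apply, smul_eq_mul]
  refine Measurable.const_mul (Finset.measurable_sum _ fun p _ => ?_) _
  have hm : Measurable fun z : ℝ × Matrix (Fin n) (Fin n) ℝ => kacRot p.1 p.2 z.1 * z.2 :=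
    ((measurable_kacRot p.1 p.2).comp measurable_fst).matrixMul measurable_snd
  have h : ∀ x : Matrix (Fin n) (Fin n) ℝ,
      (uniformAngle.map fun θ => kacRot p.1 p.2 θ * x) s =
        uniformAngle ((fun θ => (θ, x)) ⁻¹'
          ((fun z : ℝ × Matrix (Fin n) (Fin n) ℝ => kacRot p.1 p.2 z.1 * z.2) ⁻¹' s)) :=
    fun x => Measure.map_apply ((measurable_kacRot p.1 p.2).matrixMul measurable_const) hs
  simp only [h]
  exact measurable_measure_prodMk_right (hm hs)

lemma isProbabilityMeasure_kacKernel (hn : 2 ≤ n) (x : Matrix (Fin n) (Fin n) ℝ) :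
    IsProbabilityMeasure (kacKernel n x) := by
  refine ⟨?_⟩
  have hmap : ∀ p ∈ pairs n,
      (uniformAngle.map fun θ => kacRot p.1 p.2 θ * x) Set.univ = 1 := fun p _ => by
    rw [Measure.map_apply ((measurable_kacRot p.1 p.2).matrixMul measurable_const)
      MeasurableSet.univ, Set.preimage_univ, measure_univ]
  have h0 : (n.choose 2 : ℝ≥0∞) ≠ 0 := by
    exact_mod_cast (Nat.choose_pos hn).ne'
  rw [kacKernel, Measure.smul_apply, Measure.finsetSum_apply, Finset.sum_congr rfl hmap,
    Finset.sum_const, card_pairs, nsmul_eq_mul, mul_one, smul_eq_mul,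
    ENNReal.inv_mul_cancel h0 (ENNReal.natCast_ne_top _)]

lemma isProbabilityMeasure_kernelIterate (hn : 2 ≤ n) (μ : Measure (Matrix (Fin n) (Fin n) ℝ))
    [IsProbabilityMeasure μ] (t : ℕ) :
    IsProbabilityMeasure (kernelIterate (kacKernel n) t μ) := by
  induction t with
  | zero => assumption
  | succ t ih =>
    refine ⟨?_⟩
    have := fun x => isProbabilityMeasure_kacKernel hn x
    rw [kernelIterate, Measure.bind_apply MeasurableSet.univ measurable_kacKernel.aemeasurable]
    simp

open scoped Classical in
/-- The products of `t` rotations with angles in a grid of mesh `2π / (13 n²)`. -/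
def rotNet (n : ℕ) : ℕ → Finset (Matrix (Fin n) (Fin n) ℝ)
  | 0 => {1}
  | t + 1 => ((pairs n ×ˢ Finset.range (13 * n ^ 2 + 1)) ×ˢ rotNet n t).image fun q =>
      kacRot q.1.1.1 q.1.1.2 (q.1.2 * (2 * Real.pi / (13 * n ^ 2))) * q.2

lemma card_rotNet_le (hn : 4 ≤ n) (t : ℕ) : (rotNet n t).card ≤ n ^ (8 * t) := by
  induction t with
  | zero => simp [rotNet]
  | succ t ih =>
    have hp : (pairs n).card ≤ n ^ 2 := by
      refine (Finset.card_filter_le _ _).trans ?_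
      simp [pow_two]
    have h1 : n ^ 2 * (13 * n ^ 2 + 1) ≤ n ^ 8 := by
      have h2 : 16 ≤ n ^ 2 := by nlinarith
      have h3 : 13 * n ^ 2 + 1 ≤ n ^ 2 * n ^ 2 := by nlinarith
      calc n ^ 2 * (13 * n ^ 2 + 1) ≤ n ^ 2 * (n ^ 2 * n ^ 2) := by gcongr
        _ = n ^ 6 := by ring
        _ ≤ n ^ 8 := Nat.pow_le_pow_right (by omega) (by norm_num)
    calc (rotNet n (t + 1)).card
        ≤ (pairs n).card * (13 * n ^ 2 + 1) * (rotNet n t).card := by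
          refine Finset.card_image_le.trans ?_
          rw [Finset.card_product, Finset.card_product, Finset.card_range]
      _ ≤ n ^ 8 * n ^ (8 * t) := by
          gcongr
          exact (Nat.mul_le_mul_right _ hp).trans h1
      _ = n ^ (8 * (t + 1)) := by ring

lemma mem_SO_of_mem_rotNet {t : ℕ} {b : Matrix (Fin n) (Fin n) ℝ} (hb : b ∈ rotNet n t) :
    b ∈ SO n := by
  induction t generalizing b with
  | zero =>
    rw [rotNet, Finset.mem_singleton] at hb
    exact hb ▸ one_mem_SO
  | succ t ih =>
    simp only [rotNet, Finset.mem_image, Finset.mem_product] at hb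
    obtain ⟨q, ⟨⟨hq, -⟩, hb'⟩, rfl⟩ := hb
    exact mul_mem_SO (kacRot_mem_SO (ne_of_mem_pairs hq) _) (ih hb')

/-- The closed `r`-neighbourhood of the set `s` for the Hilbert–Schmidt norm. -/
def hsThickening (r : ℝ) (s : Finset (Matrix (Fin n) (Fin n) ℝ)) :
    Set (Matrix (Fin n) (Fin n) ℝ) :=
  {x | ∃ b ∈ s, hsNorm (x - b) ≤ r}

lemma measurableSet_hsThickening (r : ℝ) (s : Finset (Matrix (Fin n) (Fin n) ℝ)) :
    MeasurableSet (hsThickening r s) := by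
  have h : hsThickening r s = ⋃ b ∈ s, {x | hsNorm (x - b) ≤ r} := by
    ext x; simp [hsThickening]
  rw [h]
  exact s.measurableSet_biUnion fun b _ =>
    (measurable_hsNorm.comp (measurable_id.matrixSub measurable_const)) measurableSet_Iic

lemma kacRot_mul_mem_hsThickening (hn : 2 ≤ n) {t : ℕ} {r : ℝ}
    {x : Matrix (Fin n) (Fin n) ℝ} (hx : x ∈ hsThickening r (rotNet n t))
    {p : Fin n × Fin n} (hp : p ∈ pairs n) {θ : ℝ} (hθ : θ ∈ Set.Icc 0 (2 * Real.pi)) :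
    kacRot p.1 p.2 θ * x ∈ hsThickening (r + 1 / (n : ℝ) ^ 2) (rotNet n (t + 1)) := by
  obtain ⟨b, hb, hxb⟩ := hx
  have hn0 : (0 : ℝ) < n := by exact_mod_cast (by omega : 0 < n)
  set δ : ℝ := 2 * Real.pi / (13 * n ^ 2) with hδ
  have hδ0 : 0 < δ := by have := Real.pi_pos; positivity
  set k : ℕ := ⌊θ / δ⌋₊ with hk
  have hk1 : (k : ℝ) ≤ θ / δ := Nat.floor_le (div_nonneg hθ.1 hδ0.le)
  have hk2 : θ / δ < k + 1 := Nat.lt_floor_add_one _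
  rw [le_div_iff₀ hδ0] at hk1
  rw [div_lt_iff₀ hδ0] at hk2
  have hkle : k < 13 * n ^ 2 + 1 := by
    have h1 : (k : ℝ) * δ ≤ (13 * n ^ 2) * δ := by
      rw [hδ, mul_div_cancel₀ _ (by positivity)]
      exact hk1.trans hθ.2
    have h2 : (k : ℝ) ≤ ((13 * n ^ 2 : ℕ) : ℝ) := by
      push_cast
      exact le_of_mul_le_mul_right h1 hδ0
    exact Nat.lt_succ_of_le (by exact_mod_cast h2)
  refine ⟨kacRot p.1 p.2 (k * δ) * b, ?_, ?_⟩
  · simp only [rotNet, Finset.mem_image, Finset.mem_product, Finset.mem_range]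
    exact ⟨((p, k), b), ⟨⟨hp, hkle⟩, hb⟩, rfl⟩
  · have hsplit : kacRot p.1 p.2 θ * x - kacRot p.1 p.2 (k * δ) * b =
        kacRot p.1 p.2 θ * (x - b) + (kacRot p.1 p.2 θ - kacRot p.1 p.2 (k * δ)) * b := by
      rw [Matrix.mul_sub, Matrix.sub_mul]; abel
    rw [hsplit]
    refine (hsNorm_add_le _ _).trans (add_le_add ?_ ?_)
    · rwa [hsNorm_mul_left (kacRot_mem_SO (ne_of_mem_pairs hp) θ)]
    · rw [hsNorm_mul_right (mem_SO_of_mem_rotNet hb)]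
      refine (hsNorm_kacRot_sub_le _ _).trans ?_
      have h3 : |θ - k * δ| ≤ δ := by rw [abs_le]; constructor <;> nlinarith
      have h4 : 2 * δ ≤ 1 / (n : ℝ) ^ 2 := by
        rw [hδ, le_div_iff₀ (by positivity)]
        field_simp
        linarith [Real.pi_lt_d2]
      linarith

lemma kernelIterate_compl_hsThickening (hn : 2 ≤ n) (t : ℕ) :
    kernelIterate (kacKernel n) t (Measure.dirac 1)
      (hsThickening (t * (1 / (n : ℝ) ^ 2)) (rotNet n t))ᶜ = 0 := by
  induction t with
  | zero =>
    rw [kernelIterate, Measure.dirac_apply' _ (measurableSet_hsThickening _ _).compl]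
    simp [hsThickening, rotNet, hsNorm]
  | succ t ih =>
    have hmeas := (measurableSet_hsThickening
      (((t + 1 : ℕ) : ℝ) * (1 / (n : ℝ) ^ 2)) (rotNet n (t + 1))).compl
    rw [kernelIterate, Measure.bind_apply hmeas measurable_kacKernel.aemeasurable]
    refine lintegral_eq_zero_of_ae_eq_zero ?_
    filter_upwards [compl_mem_ae_iff.mpr ih] with x hx
    rw [compl_compl] at hx
    simp only [kacKernel, Measure.smul_apply, Measure.finsetSum_apply, Pi.zero_apply, smul_eq_mul]
    refine mul_eq_zero_of_right _ (Finset.sum_eq_zero fun p hp => ?_)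
    rw [Measure.map_apply ((measurable_kacRot p.1 p.2).matrixMul measurable_const) hmeas,
      uniformAngle, Measure.smul_apply, smul_eq_mul]
    refine mul_eq_zero_of_right _ ?_
    rw [Measure.restrict_apply (((measurable_kacRot p.1 p.2).matrixMul measurable_const) hmeas)]
    convert measure_empty (μ := volume)
    ext θ
    simp only [Set.mem_inter_iff, Set.mem_preimage, Set.mem_compl_iff, Set.mem_empty_iff_false,
      iff_false, not_and]
    intro h hθ
    refine h ?_
    have := kacRot_mul_mem_hsThickening hn hx hp hθ
    convert this using 2
    push_cast; ring

end Kernel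

section Coupling

variable {n : ℕ}

lemma measurable_hsDist :
    Measurable fun z : Matrix (Fin n) (Fin n) ℝ × Matrix (Fin n) (Fin n) ℝ =>
      hsDist z.1 z.2 := by
  simp only [hsDist_eq_ofReal_hsNorm]
  exact ENNReal.measurable_ofReal.comp
    (measurable_hsNorm.comp (measurable_fst.matrixSub measurable_snd))

/-- A coupling of small cost transfers almost sure membership to neighbourhoods. -/
lemma measure_compl_hsThickening_add_one_le {ν H : Measure (Matrix (Fin n) (Fin n) ℝ)}
    {η : Measure (Matrix (Fin n) (Fin n) ℝ × Matrix (Fin n) (Fin n) ℝ)} (hη : IsCoupling η ν H)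
    {r : ℝ} {s : Finset (Matrix (Fin n) (Fin n) ℝ)} (hν : ν (hsThickening r s)ᶜ = 0) :
    H (hsThickening (r + 1) s)ᶜ ≤ ∫⁻ z, hsDist z.1 z.2 ∂η := by
  have hfst : η (Prod.fst ⁻¹' (hsThickening r s)ᶜ) = 0 := by
    rw [← Measure.map_apply measurable_fst (measurableSet_hsThickening r s).compl, hη.1, hν]
  rw [← hη.2, Measure.map_apply measurable_snd (measurableSet_hsThickening _ s).compl]
  have hsub : (Prod.snd ⁻¹' (hsThickening (r + 1) s)ᶜ :
      Set (Matrix (Fin n) (Fin n) ℝ × Matrix (Fin n) (Fin n) ℝ)) ⊆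
      Prod.fst ⁻¹' (hsThickening r s)ᶜ ∪ {z | 1 ≤ hsDist z.1 z.2} := by
    rintro ⟨x, y⟩ hy
    by_contra hcon
    simp only [Set.mem_union, Set.mem_preimage, Set.mem_compl_iff, Set.mem_ofPred_eq, not_or,
      not_not, not_le] at hcon hy
    obtain ⟨⟨b, hb, hxb⟩, hlt⟩ := hcon
    rw [hsDist_eq_ofReal_hsNorm, ENNReal.ofReal_lt_one] at hlt
    refine hy ⟨b, hb, ?_⟩
    have := hsNorm_add_le (y - x) (x - b)
    rw [sub_add_sub_cancel, hsNorm_sub_comm y x] at this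
    linarith
  calc η (Prod.snd ⁻¹' (hsThickening (r + 1) s)ᶜ)
      ≤ η (Prod.fst ⁻¹' (hsThickening r s)ᶜ) + η {z | 1 ≤ hsDist z.1 z.2} :=
        (measure_mono hsub).trans (measure_union_le _ _)
    _ = 1 * η {z | 1 ≤ hsDist z.1 z.2} := by rw [hfst, zero_add, one_mul]
    _ ≤ ∫⁻ z, hsDist z.1 z.2 ∂η := mul_meas_ge_le_lintegral measurable_hsDist 1

/-- If a neighbourhood of `s` has Haar measure larger than `1/2`, then the quotients of elements
of `s` form a net of `SO(n)`. -/
lemma exists_hsNorm_sub_mul_transpose_le {H : Measure (Matrix (Fin n) (Fin n) ℝ)}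
    (hH : IsHaarLike (SO n) H) {r : ℝ} {s : Finset (Matrix (Fin n) (Fin n) ℝ)}
    (hs : ∀ b ∈ s, b ∈ SO n) (hlt : H (hsThickening r s)ᶜ < 1 / 2)
    {g : Matrix (Fin n) (Fin n) ℝ} (hg : g ∈ SO n) :
    ∃ q ∈ s ×ˢ s, hsNorm (g - q.1 * q.2ᵀ) ≤ 2 * r := by
  obtain ⟨hprob, -, hinv⟩ := hH
  have hB := measurableSet_hsThickening r s
  have hex : ∃ y ∈ hsThickening r s, g * y ∈ hsThickening r s := by
    by_contra! hcon
    have h1 : H (hsThickening r s) ≤ H (hsThickening r s)ᶜ := by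
      conv_lhs => rw [← (hinv g hg).1]
      rw [Measure.map_apply (f := fun x => g * x) (measurable_const.matrixMul measurable_id) hB]
      exact measure_mono fun y hy hy' => hcon y hy' hy
    have h2 : H (hsThickening r s) + H (hsThickening r s)ᶜ = 1 := prob_add_prob_compl hB
    have h3 : (1 : ℝ≥0∞) < 1 := by
      calc (1 : ℝ≥0∞) = H (hsThickening r s) + H (hsThickening r s)ᶜ := h2.symm
        _ < 1 / 2 + 1 / 2 := ENNReal.add_lt_add (h1.trans_lt hlt) hlt
        _ = 1 := ENNReal.add_halves 1
    exact lt_irrefl _ h3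
  obtain ⟨y, ⟨b₂, hb₂, hy₂⟩, b₁, hb₁, hy₁⟩ := hex
  refine ⟨(b₁, b₂), Finset.mk_mem_product hb₁ hb₂, ?_⟩
  have h1 : (g - b₁ * b₂ᵀ) * b₂ = g * (b₂ - y) + (g * y - b₁) := by
    rw [Matrix.sub_mul, Matrix.mul_assoc b₁, transpose_mul_self_of_mem_SO (hs b₂ hb₂),
      Matrix.mul_one, Matrix.mul_sub]
    abel
  calc hsNorm (g - b₁ * b₂ᵀ) = hsNorm ((g - b₁ * b₂ᵀ) * b₂) :=
        (hsNorm_mul_right (hs b₂ hb₂) _).symm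
    _ ≤ hsNorm (g * (b₂ - y)) + hsNorm (g * y - b₁) := by
        rw [h1]; exact hsNorm_add_le _ _
    _ ≤ 2 * r := by
        rw [hsNorm_mul_left hg, hsNorm_sub_comm]; linarith

end Coupling

section Completion

/-- The sum of squares of the entries of `x xᵀ`, which dominates `‖x‖_op⁴`. -/
def gramSq {m : ℕ} (x : Fin m × Fin m → ℝ) : ℝ :=
  ∑ i, ∑ k, (∑ j, x (i, j) * x (k, j)) ^ 2

lemma posSemidef_one_sub_mul_transpose {m : ℕ} {x : Fin m × Fin m → ℝ} (hx : gramSq x ≤ 1) :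
    (1 - (Matrix.of fun i j => x (i, j)) * (Matrix.of fun i j => x (i, j))ᵀ :
      Matrix (Fin m) (Fin m) ℝ).PosSemidef := by
  set P : Matrix (Fin m) (Fin m) ℝ :=
    (Matrix.of fun i j => x (i, j)) * (Matrix.of fun i j => x (i, j))ᵀ with hP
  have hPapply : ∀ i k, P i k = ∑ j, x (i, j) * x (k, j) := fun i k => by
    simp [hP, Matrix.mul_apply]
  have hgram : ∑ i, ∑ k, P i k ^ 2 ≤ 1 := by
    simpa only [hPapply, gramSq] using hx
  have hPsymm : Pᵀ = P := by rw [hP, Matrix.transpose_mul, Matrix.transpose_transpose]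
  refine Matrix.PosSemidef.of_dotProduct_mulVec_nonneg ?_ fun v => ?_
  · simp [Matrix.IsHermitian, hPsymm]
  · have hquad : v ⬝ᵥ P *ᵥ v = ∑ q : Fin m × Fin m, P q.1 q.2 * (v q.1 * v q.2) := by
      rw [Fintype.sum_prod_type]
      simp only [dotProduct, Matrix.mulVec, Finset.mul_sum]
      exact Finset.sum_congr rfl fun i _ => Finset.sum_congr rfl fun k _ => by ring
    have hcs := Finset.sum_mul_sq_le_sq_mul_sq Finset.univ
      (fun q : Fin m × Fin m => P q.1 q.2) (fun q => v q.1 * v q.2)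
    rw [← hquad, Fintype.sum_prod_type, Fintype.sum_prod_type] at hcs
    have hv : ∑ i, ∑ k, (v i * v k) ^ 2 = (v ⬝ᵥ v) ^ 2 := by
      rw [pow_two (v ⬝ᵥ v), dotProduct, Finset.sum_mul_sum]
      exact Finset.sum_congr rfl fun i _ => Finset.sum_congr rfl fun k _ => by ring
    simp only [hv] at hcs
    have hvv : 0 ≤ v ⬝ᵥ v := Finset.sum_nonneg fun i _ => mul_self_nonneg _
    have hle : v ⬝ᵥ P *ᵥ v ≤ v ⬝ᵥ v := by
      exact abs_le_of_sq_le_sq' (hcs.trans (mul_le_of_le_one_left (sq_nonneg _) hgram)) hvv |>.2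
    simpa [Matrix.sub_mulVec, dotProduct_sub] using hle

open scoped MatrixOrder in
lemma Matrix.PosSemidef.exists_eq_mul_transpose {m : ℕ} {S : Matrix (Fin m) (Fin m) ℝ}
    (hS : S.PosSemidef) : ∃ y : Matrix (Fin m) (Fin m) ℝ, S = y * yᵀ := by
  obtain ⟨B, hB⟩ := CStarAlgebra.nonneg_iff_eq_star_mul_self.mp hS.nonneg
  refine ⟨Bᵀ, ?_⟩
  rw [hB, Matrix.transpose_transpose, Matrix.star_eq_conjTranspose,
    Matrix.conjTranspose_eq_transpose_of_trivial]

/-- Any orthonormal family of rows, indexed by a proper subset, extends to a matrix in `SO(n)`. -/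
lemma exists_mem_SO_of_orthonormal_rows {n : ℕ} {v : Fin n → Fin n → ℝ} {s : Set (Fin n)}
    (hv : ∀ i ∈ s, ∀ j ∈ s, ∑ l, v i l * v j l = if i = j then 1 else 0)
    {r : Fin n} (hr : r ∉ s) : ∃ a ∈ SO n, ∀ i ∈ s, a i = v i := by
  have horth : Orthonormal ℝ (s.domRestrict fun i => WithLp.toLp 2 (v i)) := by
    rw [orthonormal_iff_ite]
    rintro ⟨i, hi⟩ ⟨j, hj⟩
    have := hv j hj i hi
    simp only [Set.domRestrict_apply, PiLp.inner_apply, RCLike.inner_apply, conj_trivial,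
      Subtype.mk.injEq]
    rw [this]
    simp [eq_comm]
  obtain ⟨b, hb⟩ := horth.exists_orthonormalBasis_extension_of_card_eq (by simp)
  let a : Matrix (Fin n) (Fin n) ℝ := Matrix.of fun i l => b i l
  have ha : a * aᵀ = 1 := by
    ext i j
    have := orthonormal_iff_ite.mp b.orthonormal j i
    simp only [PiLp.inner_apply, RCLike.inner_apply, conj_trivial] at this
    simp only [Matrix.mul_apply, Matrix.transpose_apply, a, Matrix.of_apply, this,
      Matrix.one_apply, eq_comm]
  have has : ∀ i ∈ s, a i = v i := fun i hi => by
    ext l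
    simp [a, hb i hi]
  have hdet : a.det * a.det = 1 := by
    have := congrArg Matrix.det ha
    rwa [Matrix.det_mul, Matrix.det_transpose, Matrix.det_one] at this
  rcases mul_self_eq_one_iff.mp hdet with h | h
  · exact ⟨a, ⟨ha, h⟩, has⟩
  · let d : Fin n → ℝ := Function.update 1 r (-1)
    have hd : ∀ i, d i * d i = 1 := fun i => by
      by_cases hi : i = r
      · subst hi; simp [d]
      · simp [d, hi]
    refine ⟨Matrix.diagonal d * a, ⟨?_, ?_⟩, fun i hi => ?_⟩
    · rw [Matrix.transpose_mul, Matrix.mul_assoc, ← Matrix.mul_assoc a, ha, Matrix.one_mul,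
        Matrix.diagonal_transpose, Matrix.diagonal_mul_diagonal]
      simp only [hd, Matrix.diagonal_one]
    · rw [Matrix.det_mul, Matrix.det_diagonal, h, Finset.prod_update_of_mem (Finset.mem_univ r)]
      simp
    · have hir : i ≠ r := fun h => hr (h ▸ hi)
      ext l
      rw [Matrix.diagonal_mul, has i hi]
      simp [d, hir]

/-- Every contraction is a corner of a rotation of twice the size. -/
lemma exists_mem_SO_corner_eq {m n : ℕ} (hm : 1 ≤ m) (hmn : 2 * m ≤ n)
    {x : Fin m × Fin m → ℝ} (hx : gramSq x ≤ 1) :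
    ∃ a ∈ SO n, ∀ i j : Fin m,
      a (Fin.castLE (by omega) i) (Fin.castLE (by omega) j) = x (i, j) := by
  obtain ⟨k, rfl⟩ : ∃ k, n = m + m + k := ⟨n - (m + m), by omega⟩
  obtain ⟨y, hy⟩ := (posSemidef_one_sub_mul_transpose hx).exists_eq_mul_transpose
  let w : Fin m → Fin (m + m + k) → ℝ := fun i =>
    Fin.append (Fin.append (fun j => x (i, j)) (y i)) 0
  have hw : ∀ i j, ∑ l, w i l * w j l = if i = j then 1 else 0 := by
    intro i j
    have := congrFun (congrFun hy i) j
    simp only [Matrix.sub_apply, Matrix.mul_apply, Matrix.transpose_apply, Matrix.of_apply,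
      Matrix.one_apply] at this
    simp only [w, Fin.sum_univ_add, Fin.append_left, Fin.append_right, Pi.zero_apply, mul_zero,
      Finset.sum_const_zero, add_zero]
    rw [← this]
    ring
  let v : Fin (m + m + k) → Fin (m + m + k) → ℝ := fun i =>
    if h : i.val < m then w ⟨i.val, h⟩ else 0
  obtain ⟨a, ha, hav⟩ := exists_mem_SO_of_orthonormal_rows (v := v) (s := {i | i.val < m})
    (r := ⟨m, by omega⟩) (by
      intro i hi j hj
      simp only [Set.mem_ofPred_eq] at hi hj
      simp only [v, hi, hj, dif_pos, hw, Fin.ext_iff]) (by simp)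
  refine ⟨a, ha, fun i j => ?_⟩
  rw [hav _ (by simp)]
  simp only [v, Fin.val_castLE, i.isLt, dif_pos]
  change w i (Fin.castAdd k (Fin.castAdd m j)) = _
  simp only [w, Fin.append_left]

end Completion

section Cube

/-- The uniform probability measure on `[-s, s]`. -/
def uniformSymm (s : ℝ) : Measure ℝ :=
  (ENNReal.ofReal (2 * s))⁻¹ • volume.restrict (Set.Icc (-s) s)

lemma isProbabilityMeasure_uniformSymm {s : ℝ} (hs : 0 < s) :
    IsProbabilityMeasure (uniformSymm s) := by
  refine ⟨?_⟩
  have h : ENNReal.ofReal (2 * s) ≠ 0 := by simp [hs]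
  rw [uniformSymm, Measure.smul_apply, Measure.restrict_apply_univ, Real.volume_Icc,
    sub_neg_eq_add, ← two_mul, smul_eq_mul, ENNReal.inv_mul_cancel h ENNReal.ofReal_ne_top]

lemma ae_abs_le_uniformSymm (s : ℝ) : ∀ᵐ x ∂uniformSymm s, |x| ≤ s := by
  refine Measure.ae_smul_measure ?_ _
  filter_upwards [ae_restrict_mem measurableSet_Icc] with x hx
  exact abs_le.mpr hx

lemma measurePreserving_neg_uniformSymm (s : ℝ) :
    MeasurePreserving (fun x : ℝ => -x) (uniformSymm s) (uniformSymm s) := by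
  have h := (Measure.measurePreserving_neg (volume : Measure ℝ)).restrict_preimage
    (measurableSet_Icc (a := -s) (b := s))
  have hpre : (Neg.neg ⁻¹' Set.Icc (-s) s : Set ℝ) = Set.Icc (-s) s := by
    ext x; simp only [Set.mem_preimage, Set.mem_Icc]; constructor <;> intro h <;>
      constructor <;> linarith [h.1, h.2]
  rw [hpre] at h
  exact h.smul_measure _

lemma integral_exp_neg_sq_uniformSymm_le {s : ℝ} (hs : 0 < s) {l : ℝ} (hl : 0 < l) (b : ℝ) :
    ∫ x, Real.exp (-l * (x - b) ^ 2) ∂uniformSymm s ≤ √(Real.pi / l) / (2 * s) := by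
  have hint : Integrable fun x : ℝ => Real.exp (-l * (x - b) ^ 2) :=
    (integrable_exp_neg_mul_sq hl).comp_sub_right b
  have htot : ∫ x, Real.exp (-l * (x - b) ^ 2) = √(Real.pi / l) := by
    rw [integral_sub_right_eq_self (fun x : ℝ => Real.exp (-l * x ^ 2)) b, integral_gaussian]
  rw [uniformSymm, integral_smul_measure, ENNReal.toReal_inv,
    ENNReal.toReal_ofReal (by positivity), smul_eq_mul, inv_mul_eq_div]
  gcongr
  rw [← htot]
  exact setIntegral_le_integral hint (ae_of_all _ fun x => (Real.exp_pos _).le)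

/-- The uniform probability measure on the cube `[-s, s]^(m × m)`. -/
def cubeMeasure (m : ℕ) (s : ℝ) : Measure (Fin m × Fin m → ℝ) :=
  Measure.pi fun _ => uniformSymm s

lemma isProbabilityMeasure_cubeMeasure (m : ℕ) {s : ℝ} (hs : 0 < s) :
    IsProbabilityMeasure (cubeMeasure m s) := by
  have := isProbabilityMeasure_uniformSymm hs
  unfold cubeMeasure
  infer_instance

lemma ae_abs_le_cubeMeasure (m : ℕ) {s : ℝ} (hs : 0 < s) :
    ∀ᵐ x ∂cubeMeasure m s, ∀ q, |x q| ≤ s := by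
  have := isProbabilityMeasure_uniformSymm hs
  rw [ae_all_iff]
  intro q
  exact (measurePreserving_eval (fun _ : Fin m × Fin m => uniformSymm s) q)
    |>.quasiMeasurePreserving.ae (ae_abs_le_uniformSymm s)

/-- Small Hilbert–Schmidt balls have small measure. -/
lemma cubeMeasure_real_ball_le {m : ℕ} (hm : 1 ≤ m) {s r : ℝ} (hs : 0 < s) (hr : 0 < r)
    (b : Fin m × Fin m → ℝ) :
    (cubeMeasure m s).real {x | ∑ q, (x q - b q) ^ 2 ≤ r ^ 2} ≤
      (Real.exp 1 * (√Real.pi * r / (2 * (m * s)))) ^ (m ^ 2) := by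
  have := isProbabilityMeasure_uniformSymm hs
  have := isProbabilityMeasure_cubeMeasure m hs
  have hm0 : (0 : ℝ) < m := by exact_mod_cast hm
  set l : ℝ := (m : ℝ) ^ 2 / r ^ 2 with hl
  have hl0 : 0 < l := by positivity
  set f : (Fin m × Fin m → ℝ) → ℝ := fun x => ∏ q, Real.exp (-l * (x q - b q) ^ 2) with hf
  have hf0 : ∀ x, 0 ≤ f x := fun x => Finset.prod_nonneg fun q _ => (Real.exp_pos _).le
  have hfint : Integrable f (cubeMeasure m s) := by
    refine Integrable.of_bound (C := 1) ?_ (ae_of_all _ fun x => ?_)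
    · exact (by fun_prop : Measurable f).aestronglyMeasurable
    · rw [Real.norm_of_nonneg (hf0 x)]
      refine Finset.prod_le_one (fun q _ => (Real.exp_pos _).le) fun q _ => ?_
      rw [Real.exp_le_one_iff]
      nlinarith [sq_nonneg (x q - b q)]
  have hmarkov := mul_meas_ge_le_integral_of_nonneg (ae_of_all _ hf0) hfint
    (Real.exp (-(m : ℝ) ^ 2))
  have hsub : {x | ∑ q, (x q - b q) ^ 2 ≤ r ^ 2} ⊆ {x | Real.exp (-(m : ℝ) ^ 2) ≤ f x} := by
    intro x hx
    simp only [Set.mem_ofPred_eq] at hx ⊢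
    simp only [hf]
    rw [← Real.exp_sum, Real.exp_le_exp, ← Finset.mul_sum]
    have h1 : l * ∑ q, (x q - b q) ^ 2 ≤ l * r ^ 2 := by gcongr
    have h2 : l * r ^ 2 = (m : ℝ) ^ 2 := by rw [hl]; field_simp
    linarith
  have hprod : ∫ x, f x ∂cubeMeasure m s ≤ (√(Real.pi / l) / (2 * s)) ^ (m ^ 2) := by
    rw [hf, cubeMeasure, integral_fintype_prod_eq_prod
      (fun q x => Real.exp (-l * (x - b q) ^ 2))]
    refine (Finset.prod_le_prod (fun q _ => integral_nonneg fun x => (Real.exp_pos _).le)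
      fun q _ => integral_exp_neg_sq_uniformSymm_le hs hl0 (b q)).trans ?_
    simp [pow_two, div_pow]
  have hsqrt : √(Real.pi / l) / (2 * s) = √Real.pi * r / (2 * (m * s)) := by
    rw [hl, ← div_pow, Real.sqrt_div' _ (by positivity), Real.sqrt_sq (by positivity)]
    field_simp
  have hexp : Real.exp 1 ^ (m ^ 2) * Real.exp (-(m : ℝ) ^ 2) = 1 := by
    rw [← Real.exp_nat_mul, ← Real.exp_add]
    simp
  have hmono := measureReal_mono (μ := cubeMeasure m s) hsub
  rw [hsqrt] at hprod
  rw [mul_pow]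
  calc (cubeMeasure m s).real {x | ∑ q, (x q - b q) ^ 2 ≤ r ^ 2}
      ≤ (cubeMeasure m s).real {x | Real.exp (-(m : ℝ) ^ 2) ≤ f x} := hmono
    _ = Real.exp 1 ^ (m ^ 2) * (Real.exp (-(m : ℝ) ^ 2) *
          (cubeMeasure m s).real {x | Real.exp (-(m : ℝ) ^ 2) ≤ f x}) := by
        rw [← mul_assoc, hexp, one_mul]
    _ ≤ Real.exp 1 ^ (m ^ 2) * (√Real.pi * r / (2 * (m * s))) ^ (m ^ 2) := by
        gcongr
        exact hmarkov.trans hprod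

lemma integral_eq_zero_of_flip {m : ℕ} {s : ℝ} (hs : 0 < s) (q : Fin m × Fin m)
    {f : (Fin m × Fin m → ℝ) → ℝ}
    (hf : ∀ x, f (fun p => if p = q then -x p else x p) = -f x) :
    ∫ x, f x ∂cubeMeasure m s = 0 := by
  have := isProbabilityMeasure_uniformSymm hs
  have hflip : MeasurePreserving (fun (x : Fin m × Fin m → ℝ) p => if p = q then -x p else x p)
      (cubeMeasure m s) (cubeMeasure m s) := by
    have h := measurePreserving_pi (fun _ : Fin m × Fin m => uniformSymm s)
      (fun _ => uniformSymm s) (f := fun p y => if p = q then -y else y) fun p => by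
        by_cases hp : p = q
        · simpa [hp] using measurePreserving_neg_uniformSymm s
        · simp only [hp, if_false]
          exact MeasurePreserving.id _
    exact h
  have hemb : MeasurableEmbedding
      (fun (x : Fin m × Fin m → ℝ) p => if p = q then -x p else x p) := by
    have hinv : Function.Involutive
        (fun (x : Fin m × Fin m → ℝ) p => if p = q then -x p else x p) := fun x => by
      ext p; by_cases hp : p = q <;> simp [hp]
    exact (MeasurableEquiv.ofInvolutive _ hinv hflip.measurable).measurableEmbedding
  have h := hflip.integral_comp hemb f
  simp only [hf, integral_neg] at h
  linarith

lemma integral_quad_le {m : ℕ} {s : ℝ} (hs : 0 < s) (i k j l : Fin m) :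
    ∫ x, x (i, j) * x (k, j) * (x (i, l) * x (k, l)) ∂cubeMeasure m s ≤
      s ^ 4 * ((if i = k then 1 else 0) + if j = l then 1 else 0) := by
  have := isProbabilityMeasure_cubeMeasure m hs
  by_cases h : i = k ∨ j = l
  · have hle : ∫ x, x (i, j) * x (k, j) * (x (i, l) * x (k, l)) ∂cubeMeasure m s ≤ s ^ 4 := by
      have hb : ∀ᵐ x ∂cubeMeasure m s,
          ‖x (i, j) * x (k, j) * (x (i, l) * x (k, l))‖ ≤ s ^ 4 := by
        filter_upwards [ae_abs_le_cubeMeasure m hs] with x hx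
        rw [Real.norm_eq_abs, abs_mul, abs_mul, abs_mul]
        calc _ ≤ s * s * (s * s) := by gcongr <;> exact hx _
          _ = s ^ 4 := by ring
      refine (Real.le_norm_self _).trans ((norm_integral_le_of_norm_le_const hb).trans ?_)
      simp
    have h1 : (1 : ℝ) ≤ (if i = k then 1 else 0) + if j = l then 1 else 0 := by
      rcases h with h | h <;> simp only [h, if_true] <;> split_ifs <;> norm_num
    exact hle.trans (le_mul_of_one_le_right (by positivity) h1)
  · push Not at h
    rw [integral_eq_zero_of_flip hs (i, j)]
    · simp [h.1, h.2]
    · intro x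
      have h1 : ((k, j) : Fin m × Fin m) ≠ (i, j) := by simp [Ne.symm h.1]
      have h2 : ((i, l) : Fin m × Fin m) ≠ (i, j) := by simp [Ne.symm h.2]
      have h3 : ((k, l) : Fin m × Fin m) ≠ (i, j) := by simp [Ne.symm h.1]
      simp only [h1, h2, h3, if_true, if_false]
      ring

lemma gramSq_eq_sum {m : ℕ} (x : Fin m × Fin m → ℝ) :
    gramSq x = ∑ i, ∑ k, ∑ j, ∑ l, x (i, j) * x (k, j) * (x (i, l) * x (k, l)) := by
  simp only [gramSq, pow_two, Finset.sum_mul_sum]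

lemma integrable_quad {m : ℕ} {s : ℝ} (hs : 0 < s) (i k j l : Fin m) :
    Integrable (fun x => x (i, j) * x (k, j) * (x (i, l) * x (k, l))) (cubeMeasure m s) := by
  have := isProbabilityMeasure_cubeMeasure m hs
  refine Integrable.of_bound (C := s * s * (s * s)) ?_ ?_
  · exact Measurable.aestronglyMeasurable (by fun_prop)
  · filter_upwards [ae_abs_le_cubeMeasure m hs] with x hx
    rw [Real.norm_eq_abs, abs_mul, abs_mul, abs_mul]
    gcongr <;> exact hx _

lemma integral_gramSq_le {m : ℕ} {s : ℝ} (hs : 0 < s) :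
    ∫ x, gramSq x ∂cubeMeasure m s ≤ 2 * m ^ 3 * s ^ 4 := by
  have hint := fun i k j l => integrable_quad (m := m) hs i k j l
  simp only [gramSq_eq_sum]
  have heq : ∫ x, ∑ i, ∑ k, ∑ j, ∑ l, x (i, j) * x (k, j) * (x (i, l) * x (k, l))
      ∂cubeMeasure m s = ∑ i, ∑ k, ∑ j, ∑ l,
        ∫ x, x (i, j) * x (k, j) * (x (i, l) * x (k, l)) ∂cubeMeasure m s := by
    rw [integral_finsetSum _ fun i _ => integrable_finsetSum _ fun k _ =>
      integrable_finsetSum _ fun j _ => integrable_finsetSum _ fun l _ => hint i k j l]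
    refine Finset.sum_congr rfl fun i _ => ?_
    rw [integral_finsetSum _ fun k _ =>
      integrable_finsetSum _ fun j _ => integrable_finsetSum _ fun l _ => hint i k j l]
    refine Finset.sum_congr rfl fun k _ => ?_
    rw [integral_finsetSum _ fun j _ => integrable_finsetSum _ fun l _ => hint i k j l]
    refine Finset.sum_congr rfl fun j _ => ?_
    rw [integral_finsetSum _ fun l _ => hint i k j l]
  rw [heq]
  calc _ ≤ ∑ i : Fin m, ∑ k : Fin m, ∑ j : Fin m, ∑ l : Fin m,
        s ^ 4 * (((if i = k then 1 else 0) + if j = l then 1 else 0 : ℝ)) := by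
        gcongr with i _ k _ j _ l _
        exact integral_quad_le hs i k j l
    _ = 2 * m ^ 3 * s ^ 4 := by
        simp only [← Finset.mul_sum, Finset.sum_add_distrib, Finset.sum_const, Finset.card_univ,
          Fintype.card_fin, nsmul_eq_mul, Finset.sum_ite_eq, Finset.mem_univ, if_true]
        ring

lemma half_le_cubeMeasure_real_gramSq_le {m : ℕ} {s : ℝ} (hs : 0 < s)
    (hms : 4 * (m : ℝ) ^ 3 * s ^ 4 ≤ 1) :
    1 / 2 ≤ (cubeMeasure m s).real {x | gramSq x ≤ 1} := by
  have := isProbabilityMeasure_cubeMeasure m hs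
  have hmeas : Measurable (gramSq : (Fin m × Fin m → ℝ) → ℝ) := by
    unfold gramSq; fun_prop
  have hint : Integrable gramSq (cubeMeasure m s) := by
    have : (gramSq : (Fin m × Fin m → ℝ) → ℝ) = fun x =>
        ∑ i, ∑ k, ∑ j, ∑ l, x (i, j) * x (k, j) * (x (i, l) * x (k, l)) :=
      funext gramSq_eq_sum
    rw [this]
    exact integrable_finsetSum _ fun i _ => integrable_finsetSum _ fun k _ =>
      integrable_finsetSum _ fun j _ => integrable_finsetSum _ fun l _ =>
        integrable_quad hs i k j l
  have hmarkov := mul_meas_ge_le_integral_of_nonneg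
    (ae_of_all _ fun x => (by unfold gramSq; positivity : 0 ≤ gramSq x)) hint 1
  have hcompl : {x : Fin m × Fin m → ℝ | gramSq x ≤ 1}ᶜ ⊆ {x | 1 ≤ gramSq x} := by
    intro x hx
    simp only [Set.mem_compl_iff, Set.mem_ofPred_eq, not_le] at hx ⊢
    exact hx.le
  have h1 := measureReal_mono (μ := cubeMeasure m s) hcompl
  rw [probReal_compl_eq_one_sub (measurableSet_le hmeas measurable_const)] at h1
  linarith [integral_gramSq_le (m := m) hs]

end Cube

section Covering

variable {n : ℕ}

/-- The volumetric lower bound on the size of a net of `SO(n)`. -/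
lemma half_le_card_mul_of_cover {m : ℕ} (hm : 1 ≤ m) (hmn : 2 * m ≤ n) {s r : ℝ} (hs : 0 < s)
    (hr : 0 < r) (hms : 4 * (m : ℝ) ^ 3 * s ^ 4 ≤ 1) {ι : Type*} (T : Finset ι)
    (c : ι → Matrix (Fin n) (Fin n) ℝ)
    (hT : ∀ g ∈ SO n, ∃ q ∈ T, hsNorm (g - c q) ≤ r) :
    1 / 2 ≤ (T.card : ℝ) * (Real.exp 1 * (√Real.pi * r / (2 * (m * s)))) ^ (m ^ 2) := by
  have := isProbabilityMeasure_cubeMeasure m hs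
  let φ : Fin m → Fin n := Fin.castLE (by omega)
  have hφ : Function.Injective φ := Fin.castLE_injective _
  let B : ι → Set (Fin m × Fin m → ℝ) := fun q =>
    {x | ∑ p : Fin m × Fin m, (x p - c q (φ p.1) (φ p.2)) ^ 2 ≤ r ^ 2}
  have hcover : {x : Fin m × Fin m → ℝ | gramSq x ≤ 1} ⊆ ⋃ q ∈ T, B q := by
    intro x hx
    obtain ⟨a, ha, hax⟩ := exists_mem_SO_corner_eq hm hmn hx
    obtain ⟨q, hq, hle⟩ := hT a ha
    refine Set.mem_biUnion hq ?_
    have hsq : hsNorm (a - c q) ^ 2 ≤ r ^ 2 := by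
      have := hsNorm_nonneg (a - c q)
      gcongr
    refine le_trans ?_ hsq
    rw [hsNorm_sq, ← Fintype.sum_prod_type' (f := fun i j => (a - c q) i j ^ 2)]
    have hmap : ∀ p : Fin m × Fin m, (x p - c q (φ p.1) (φ p.2)) ^ 2 =
        (fun z : Fin n × Fin n => (a - c q) z.1 z.2 ^ 2) (Prod.map φ φ p) := fun p => by
      simp only [Prod.map, Matrix.sub_apply, φ, hax]
    calc ∑ p : Fin m × Fin m, (x p - c q (φ p.1) (φ p.2)) ^ 2
        = ∑ z ∈ Finset.univ.map ⟨Prod.map φ φ, hφ.prodMap hφ⟩, (a - c q) z.1 z.2 ^ 2 := by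
          rw [Finset.sum_map]
          exact Finset.sum_congr rfl fun p _ => hmap p
      _ ≤ ∑ z : Fin n × Fin n, (a - c q) z.1 z.2 ^ 2 :=
          Finset.sum_le_sum_of_subset_of_nonneg (Finset.subset_univ _) fun _ _ _ => sq_nonneg _
  calc 1 / 2 ≤ (cubeMeasure m s).real {x | gramSq x ≤ 1} :=
        half_le_cubeMeasure_real_gramSq_le hs hms
    _ ≤ (cubeMeasure m s).real (⋃ q ∈ T, B q) := measureReal_mono hcover (measure_ne_top _ _)
    _ ≤ ∑ q ∈ T, (cubeMeasure m s).real (B q) := measureReal_biUnion_finset_le _ _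
    _ ≤ ∑ _q ∈ T, (Real.exp 1 * (√Real.pi * r / (2 * (m * s)))) ^ (m ^ 2) :=
        Finset.sum_le_sum fun q _ => cubeMeasure_real_ball_le hm hs hr _
    _ = _ := by rw [Finset.sum_const, nsmul_eq_mul]

/-- A net of `SO(n)` at distance `4` has at least `n ^ (⌊n / 2⌋² / 8) / 2` points. -/
lemma pow_le_card_pow_of_cover (hn : 10 ^ 11 ≤ n) {ι : Type*} (T : Finset ι)
    (c : ι → Matrix (Fin n) (Fin n) ℝ)
    (hT : ∀ g ∈ SO n, ∃ q ∈ T, hsNorm (g - c q) ≤ 4) :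
    (n : ℝ) ^ ((n / 2) ^ 2) ≤ 256 * (T.card : ℝ) ^ 8 := by
  set m : ℕ := n / 2 with hmdef
  have hm : 1 ≤ m := by omega
  have hn3 : n ≤ 3 * m := by omega
  have hm0 : (0 : ℝ) < m := by exact_mod_cast hm
  have hn0 : (0 : ℝ) < n := by exact_mod_cast (by omega : 0 < n)
  have hn11 : (10 : ℝ) ^ 11 ≤ n := by exact_mod_cast hn
  have hn3' : (n : ℝ) ≤ 3 * m := by exact_mod_cast hn3
  set s : ℝ := √√(1 / (4 * (m : ℝ) ^ 3)) with hsdef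
  have hs : 0 < s := Real.sqrt_pos.mpr (Real.sqrt_pos.mpr (by positivity))
  have hs4 : s ^ 4 = 1 / (4 * (m : ℝ) ^ 3) := by
    rw [show s ^ 4 = (s ^ 2) ^ 2 by ring, hsdef, Real.sq_sqrt (Real.sqrt_nonneg _),
      Real.sq_sqrt (by positivity)]
  have hmain := half_le_card_mul_of_cover hm (by omega) hs (by norm_num : (0 : ℝ) < 4)
    (by rw [hs4]; field_simp; norm_num) T c hT
  set q : ℝ := Real.exp 1 * (√Real.pi * 4 / (2 * (m * s))) with hq
  have hq0 : 0 ≤ q := by positivity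
  have hq12 : q ≤ 12 / (m * s) := by
    have he : Real.exp 1 ≤ 3 := Real.exp_one_lt_d9.le.trans (by norm_num)
    have hpi : √Real.pi ≤ 2 := by
      rw [Real.sqrt_le_left (by norm_num)]
      linarith [Real.pi_lt_d2]
    calc q ≤ 3 * (2 * 4 / (2 * (m * s))) := by rw [hq]; gcongr
      _ = 12 / (m * s) := by field_simp; norm_num
  have hms8 : (m * s) ^ 8 = (m : ℝ) ^ 2 / 16 := by
    rw [show (m * s) ^ 8 = (m : ℝ) ^ 8 * (s ^ 4) ^ 2 by ring, hs4]
    field_simp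
    norm_num
  have hq8 : q ^ 8 ≤ 1 / n := by
    calc q ^ 8 ≤ (12 / (m * s)) ^ 8 := by gcongr
      _ = 12 ^ 8 * 16 / (m : ℝ) ^ 2 := by rw [div_pow, hms8]; field_simp
      _ ≤ 1 / n := by
        rw [div_le_div_iff₀ (by positivity) hn0]
        nlinarith
  have h8 : (1 / 256 : ℝ) ≤ (T.card : ℝ) ^ 8 * (1 / n) ^ (m ^ 2) := by
    calc (1 / 256 : ℝ) = (1 / 2) ^ 8 := by norm_num
      _ ≤ ((T.card : ℝ) * q ^ (m ^ 2)) ^ 8 := by gcongr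
      _ = (T.card : ℝ) ^ 8 * (q ^ 8) ^ (m ^ 2) := by rw [mul_pow, pow_right_comm]
      _ ≤ _ := by gcongr
  rw [div_pow, one_pow, mul_one_div, le_div_iff₀ (by positivity)] at h8
  linarith

lemma exists_mem_SO_two_lt_hsNorm_sub_one (hn : 2 ≤ n) :
    ∃ g ∈ SO n, 2 < hsNorm (g - 1) := by
  let i : Fin n := ⟨0, by omega⟩
  let j : Fin n := ⟨1, by omega⟩
  have hij : i ≠ j := by simp [i, j]
  refine ⟨kacRot i j Real.pi, kacRot_mem_SO hij _, ?_⟩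
  set a := kacRot i j Real.pi - 1 with ha
  have hi : a i i = -2 := by simp [ha, kacRot]; norm_num
  have hj : a j j = -2 := by simp [ha, kacRot, hij.symm]; norm_num
  have h1 : ∑ k ∈ {i, j}, a k k ^ 2 ≤ ∑ k, ∑ l, a k l ^ 2 := by
    refine (Finset.sum_le_sum_of_subset_of_nonneg (Finset.subset_univ _)
      fun _ _ _ => sq_nonneg _).trans (Finset.sum_le_sum fun k _ => ?_)
    exact Finset.single_le_sum (f := fun l => a k l ^ 2) (fun _ _ => sq_nonneg _)
      (Finset.mem_univ k)
  rw [Finset.sum_pair hij, hi, hj, ← hsNorm_sq] at h1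
  nlinarith [hsNorm_nonneg a]

/-- Quotients of products of few rotations do not form a net of `SO(n)`. -/
lemma exists_mem_SO_forall_lt_hsNorm_sub (hn : 2 ≤ n) {t : ℕ}
    (ht : (t : ℝ) < 1 / 10 ^ 22 * (n : ℝ) ^ 2) :
    ∃ g ∈ SO n, ∀ q ∈ rotNet n t ×ˢ rotNet n t,
      2 * (t * (1 / (n : ℝ) ^ 2) + 1) < hsNorm (g - q.1 * q.2ᵀ) := by
  have hn0 : (0 : ℝ) < n := by exact_mod_cast (by omega : 0 < n)
  rcases lt_or_ge n (10 ^ 11) with hlt | hge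
  · have hlt' : (n : ℝ) < 10 ^ 11 := by exact_mod_cast hlt
    have ht1 : (t : ℝ) < 1 := by
      have : (n : ℝ) ^ 2 < (10 ^ 11) ^ 2 := by gcongr
      linarith
    obtain rfl : t = 0 := by
      have : t < 1 := by exact_mod_cast ht1
      omega
    obtain ⟨g, hg, hg2⟩ := exists_mem_SO_two_lt_hsNorm_sub_one hn
    refine ⟨g, hg, ?_⟩
    simpa [rotNet] using hg2
  · by_contra! hcon
    have hr : 2 * (t * (1 / (n : ℝ) ^ 2) + 1) ≤ 4 := by
      have : (t : ℝ) * (1 / (n : ℝ) ^ 2) ≤ 1 := by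
        rw [mul_one_div, div_le_one (by positivity)]
        nlinarith [sq_nonneg (n : ℝ)]
      linarith
    have hcard := pow_le_card_pow_of_cover hge (rotNet n t ×ˢ rotNet n t)
      (fun q => q.1 * q.2ᵀ) fun g hg => by
        obtain ⟨q, hq, hle⟩ := hcon g hg
        exact ⟨q, hq, hle.trans hr⟩
    have hN : ((rotNet n t ×ˢ rotNet n t).card : ℝ) ≤ (n : ℝ) ^ (16 * t) := by
      have h := card_rotNet_le (n := n) (by omega) t
      have h2 : (rotNet n t ×ˢ rotNet n t).card ≤ n ^ (16 * t) := by
        rw [Finset.card_product]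
        calc _ ≤ n ^ (8 * t) * n ^ (8 * t) := Nat.mul_le_mul h h
          _ = n ^ (16 * t) := by rw [← pow_add]; congr 1; omega
      exact_mod_cast h2
    have hexp : 128 * t + 1 ≤ (n / 2) ^ 2 := by
      have h3 : n ≤ 3 * (n / 2) := by omega
      have h3' : (n : ℝ) ≤ 3 * ((n / 2 : ℕ) : ℝ) := by exact_mod_cast h3
      have hn11 : (10 : ℝ) ^ 11 ≤ n := by exact_mod_cast hge
      have : (128 * t + 1 : ℝ) ≤ ((n / 2 : ℕ) : ℝ) ^ 2 := by nlinarith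
      exact_mod_cast this
    have hn1 : (1 : ℝ) ≤ n := by exact_mod_cast (by omega : 1 ≤ n)
    have hfin : (n : ℝ) ^ (128 * t) * n ≤ 256 * (n : ℝ) ^ (128 * t) := by
      calc (n : ℝ) ^ (128 * t) * n = (n : ℝ) ^ (128 * t + 1) := (pow_succ _ _).symm
        _ ≤ (n : ℝ) ^ ((n / 2) ^ 2) := pow_le_pow_right₀ hn1 hexp
        _ ≤ 256 * ((rotNet n t ×ˢ rotNet n t).card : ℝ) ^ 8 := hcard
        _ ≤ 256 * ((n : ℝ) ^ (16 * t)) ^ 8 := by gcongr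
        _ = 256 * (n : ℝ) ^ (128 * t) := by rw [← pow_mul, show 16 * t * 8 = 128 * t by ring]
    have hpos : (0 : ℝ) < (n : ℝ) ^ (128 * t) := by positivity
    have hle : (n : ℝ) ≤ 256 := by nlinarith
    have : n ≤ 256 := by exact_mod_cast hle
    omega

end Covering

/-- **Theorem 2.** There are constants `c, ε₀ > 0` such that for every `n ≥ 2`, Kac's
random walk on `SO(n)` satisfies `τ_{hs,1}(ε₀) ≥ c n²`: for every integer `t < c n²`
there is a probability measure `μ` on `SO(n)` whose time-`t` distribution is at
`L¹`-transportation-cost distance greater than `ε₀` from the Haar measure (w.r.t. the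
Hilbert–Schmidt metric). -/
theorem kac_walk_mixing_time_lower_bound :
    ∃ c : ℝ, 0 < c ∧ ∃ ε₀ : ℝ, 0 < ε₀ ∧
      ∀ n : ℕ, 2 ≤ n → ∀ t : ℕ, (t : ℝ) < c * (n : ℝ) ^ 2 →
        ∃ μ : Measure (Matrix (Fin n) (Fin n) ℝ),
          IsProbabilityMeasure μ ∧ μ (SO n)ᶜ = 0 ∧
            ENNReal.ofReal ε₀ <
              wassersteinE hsDist 1 (kernelIterate (kacKernel n) t μ)
                (haarLike (SO n)) := by
  refine ⟨1 / 10 ^ 22, by norm_num, 1 / 4, by norm_num, fun n hn t ht => ?_⟩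
  refine ⟨Measure.dirac 1, inferInstance, ?_, ?_⟩
  · refine measure_mono_null (t := {x | x ≠ 1}) (fun x hx h => hx (h ▸ one_mem_SO)) ?_
    have hmeas : MeasurableSet {x : Matrix (Fin n) (Fin n) ℝ | x ≠ 1} := by
      have : {x : Matrix (Fin n) (Fin n) ℝ | x ≠ 1} =
          ⋃ i, ⋃ j, {x | x i j ≠ (1 : Matrix _ _ ℝ) i j} := by
        ext x
        simp [← Matrix.ext_iff]
      rw [this]
      exact MeasurableSet.iUnion fun i => MeasurableSet.iUnion fun j =>
        measurable_matrix_apply i j (measurableSet_singleton _).compl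
    rw [Measure.dirac_apply' _ hmeas]
    simp
  · have hprob := isProbabilityMeasure_kernelIterate hn (Measure.dirac 1) t
    have hquarter : ENNReal.ofReal (1 / 4) < 1 / 2 := by
      rw [show (1 / 2 : ℝ≥0∞) = ENNReal.ofReal (1 / 2) by
        rw [ENNReal.ofReal_div_of_pos (by norm_num)]; simp]
      exact (ENNReal.ofReal_lt_ofReal_iff (by norm_num)).mpr (by norm_num)
    refine hquarter.trans_le (le_iInf₂ fun η hη => ?_)
    simp only [ENNReal.rpow_one, div_one]
    have hHaar : ∃ H, IsHaarLike (SO n) H := by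
      by_contra hno
      have h0 : haarLike (SO n) = 0 := by simp [haarLike, hno]
      have h1 : η Set.univ = 1 := by
        rw [← Set.preimage_univ (f := Prod.fst), ← Measure.map_apply measurable_fst .univ, hη.1,
          measure_univ]
      have h2 : η Set.univ = 0 := by
        rw [← Set.preimage_univ (f := Prod.snd), ← Measure.map_apply measurable_snd .univ, hη.2,
          h0, Measure.coe_zero, Pi.zero_apply]
      exact one_ne_zero (h1.symm.trans h2)
    have hH : IsHaarLike (SO n) (haarLike (SO n)) := by
      rw [haarLike, dif_pos hHaar]
      exact hHaar.choose_spec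
    by_contra! hlt
    obtain ⟨g, hg, hfar⟩ := exists_mem_SO_forall_lt_hsNorm_sub hn ht
    obtain ⟨q, hq, hle⟩ := exists_hsNorm_sub_mul_transpose_le hH
      (fun b hb => mem_SO_of_mem_rotNet hb)
      ((measure_compl_hsThickening_add_one_le hη
        (kernelIterate_compl_hsThickening hn t)).trans_lt hlt) hg
    exact (hfar q hq).not_ge hle

end
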